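/- arXiv:1810.00987 — 5 statements merged into one kernel-verified Lean document; each statement's English description precedes it below -/
import Mathlib

section
/- Let n ≥ 2 and k ∈ {2,…,n+1} be integers and let μ be a Borel probability measure supported in [0,1]ⁿ. Then for every δ > 0 and every g ∈ O(n): E(μ,g,δ) ≤ ∫_{ℝⁿ} ν_g(B(z,2.5δ))^{k−1} dν_g(z). -/
/-!
Write `f (u, v) = u - g v`, so that `ν_g` is the law of `f` under `μ × μ`. Pairing the coordinates
`(x_i, y_i)` and applying `f` to each pair turns `μ^{2k}` into the product measure `ν_g^k`, so the
energy is the `ν_g^k`-measure of the `k`-tuples `(z_1, …, z_k)` with pairwise distances at most `δ`.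
Keeping only the constraints that involve `z_1`, and enlarging the radius from `δ` to `2.5 δ`, gives
a larger set of tuples. Given `z_1 = z` the other `k - 1` points are independent and each lies in
`B(z, 2.5 δ)`, so by Tonelli that set has measure `∫ ν_g(B(z, 2.5 δ))^{k-1} dν_g(z)`.
-/

open MeasureTheory Metric ENNReal

noncomputable section

/-- The action of `g ∈ O(n)` on `ℝⁿ`. -/
def act {n : ℕ} (g : Matrix.orthogonalGroup (Fin n) ℝ) (v : EuclideanSpace ℝ (Fin n)) :
    EuclideanSpace ℝ (Fin n) := Matrix.toEuclideanLin (g : Matrix (Fin n) (Fin n) ℝ) v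

/-- `ν_g = μ * gμ`, the pushforward of `μ × μ` under `(u,v) ↦ u - g v`. -/
def nuG {n : ℕ} (μ : Measure (EuclideanSpace ℝ (Fin n))) (g : Matrix.orthogonalGroup (Fin n) ℝ) :
    Measure (EuclideanSpace ℝ (Fin n)) :=
  Measure.map (fun p : EuclideanSpace ℝ (Fin n) × EuclideanSpace ℝ (Fin n) => p.1 - act g p.2)
    (μ.prod μ)

/-- The group-theoretic energy
`E(μ,g,δ) = μ^{2k}{(x,y) : |(x_i - g y_i) - (x_j - g y_j)| ≤ δ for all i < j}`. -/
def energyGT {n : ℕ} (k : ℕ) (μ : Measure (EuclideanSpace ℝ (Fin n)))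
    (g : Matrix.orthogonalGroup (Fin n) ℝ) (δ : ℝ) : ℝ≥0∞ :=
  ((Measure.pi fun _ : Fin k => μ).prod (Measure.pi fun _ : Fin k => μ))
    {p | ∀ i j : Fin k, i < j →
      dist (p.1 i - act g (p.2 i)) (p.1 j - act g (p.2 j)) ≤ δ}

lemma continuous_sub_act {n : ℕ} (g : Matrix.orthogonalGroup (Fin n) ℝ) :
    Continuous (fun p : EuclideanSpace ℝ (Fin n) × EuclideanSpace ℝ (Fin n) =>
      p.1 - act g p.2) := by
  have h : Continuous (act g) := LinearMap.continuous_of_finiteDimensional _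
  fun_prop

/-- The product of two copies of `μ^k` is carried to `ν_g^k` by forming the differences
`x_i - g y_i`. -/
lemma measurePreserving_sub_act {n : ℕ} (k : ℕ) (μ : Measure (EuclideanSpace ℝ (Fin n)))
    [IsProbabilityMeasure μ] (g : Matrix.orthogonalGroup (Fin n) ℝ)
    [IsProbabilityMeasure (nuG μ g)] :
    MeasurePreserving
      (fun (p : (Fin k → EuclideanSpace ℝ (Fin n)) × (Fin k → EuclideanSpace ℝ (Fin n))) i =>
        p.1 i - act g (p.2 i))
      ((Measure.pi fun _ : Fin k => μ).prod (Measure.pi fun _ : Fin k => μ))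
      (Measure.pi fun _ : Fin k => nuG μ g) := by
  have h1 := (measurePreserving_arrowProdEquivProdArrow (EuclideanSpace ℝ (Fin n))
    (EuclideanSpace ℝ (Fin n)) (Fin k) (fun _ => μ) (fun _ => μ)).symm
  have h2 := measurePreserving_pi (fun _ : Fin k => μ.prod μ) (fun _ : Fin k => nuG μ g)
    (fun _ => (continuous_sub_act g).measurable.measurePreserving (μ.prod μ))
  exact h2.comp h1

/-- Under `ν^{m+1}`, the tuples whose points all lie within `r` of the first one have measure
`∫ ν(B(z, r))^m dν(z)`. -/
lemma pi_star_eq_lintegral {E : Type*} [PseudoMetricSpace E] [SecondCountableTopology E]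
    [MeasurableSpace E] [BorelSpace E] (ν : Measure E) [SigmaFinite ν] (m : ℕ) (r : ℝ) :
    (Measure.pi fun _ : Fin (m + 1) => ν) {z | ∀ j : Fin m, z j.succ ∈ closedBall (z 0) r} =
      ∫⁻ z, ν (closedBall z r) ^ m ∂ν := by
  have hS : MeasurableSet {q : E × (Fin m → E) | ∀ j : Fin m, q.2 j ∈ closedBall q.1 r} := by
    simp only [mem_closedBall, Set.ofPred_forall]
    refine MeasurableSet.iInter fun j => ?_
    exact measurableSet_le (by fun_prop) measurable_const
  have h := (measurePreserving_piFinSuccAbove (fun _ : Fin (m + 1) => ν) 0).measure_preimage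
    hS.nullMeasurableSet
  have hpre : MeasurableEquiv.piFinSuccAbove (fun _ : Fin (m + 1) => E) 0 ⁻¹'
      {q : E × (Fin m → E) | ∀ j : Fin m, q.2 j ∈ closedBall q.1 r} =
      {z | ∀ j : Fin m, z j.succ ∈ closedBall (z 0) r} := rfl
  rw [← hpre, h, Measure.prod_apply hS]
  refine lintegral_congr fun z => ?_
  have : Prod.mk z ⁻¹' {q : E × (Fin m → E) | ∀ j : Fin m, q.2 j ∈ closedBall q.1 r} =
      Set.univ.pi fun _ : Fin m => closedBall z r := by
    ext w; simp
  rw [this, Measure.pi_pi]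
  simp

theorem stmt9 {n k : ℕ} (hn : 2 ≤ n) (hk2 : 2 ≤ k) (hkn : k ≤ n + 1)
    (μ : Measure (EuclideanSpace ℝ (Fin n))) [IsProbabilityMeasure μ]
    (hsupp : μ {x : EuclideanSpace ℝ (Fin n) | ∀ i, x i ∈ Set.Icc (0 : ℝ) 1}ᶜ = 0)
    (δ : ℝ) (hδ : 0 < δ) (g : Matrix.orthogonalGroup (Fin n) ℝ) :
    energyGT k μ g δ ≤ ∫⁻ z, (nuG μ g (closedBall z (2.5 * δ))) ^ (k - 1) ∂(nuG μ g) := by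
  obtain ⟨m, rfl⟩ : ∃ m, k = m + 1 := ⟨k - 1, by omega⟩
  have : IsProbabilityMeasure (nuG μ g) :=
    Measure.isProbabilityMeasure_map (continuous_sub_act g).measurable.aemeasurable
  have hmp := measurePreserving_sub_act (m + 1) μ g
  rw [Nat.add_sub_cancel, ← pi_star_eq_lintegral, ← hmp.map_eq]
  refine le_trans (measure_mono ?_) (Measure.le_map_apply hmp.aemeasurable _)
  intro p hp j
  have h := hp 0 j.succ (Fin.succ_pos j)
  rw [dist_comm] at h
  exact mem_closedBall.2 (h.trans (by linarith))

end
end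

section
/- There is an absolute constant C > 0 with the following property. Let δ ∈ (0,1) and let l₁,…,l_L be unit line segments in ℝ³ with pairwise δ-separated directions. Then for every real r ≥ 1, λ(P_r) ≤ C δ² L^{3/2} / r², where P_r is the set of points of ℝ³ belonging to at least r of the tubes l₁^δ,…,l_L^δ. -/
/-!
This is Córdoba's `L²` argument. Write `N x` for the number of tubes containing `x`. By Markov's
inequality `r² λ(P_r) ≤ ∫ N² = ∑ i, ∑ j, λ(T_i ∩ T_j)` (`markov_mult`), so it is enough to bound
each inner sum by a constant times `δ² √L`.

Two tubes whose directions have inner product `u`, so that the sine of their angle is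
`s = √(1 - u²)`, meet inside a box of dimensions `O(δ / (s + δ)) × O(δ) × O(δ)`, whence
`λ(T_i ∩ T_j) ≲ δ² · δ / (s + δ)` (`volume_tube_inter`).

It remains to show `∑ j, δ / (s_j + δ) ≲ √L` for `L` points of the unit sphere that are
`δ`-separated (`sphere_sum`). Stereographic projection of the closed hemisphere centred at the
`i`-th direction, from the antipode of that direction, has a `2`-Lipschitz inverse and does not
increase `s`; rounding to the grid of mesh `δ / 8` therefore gives an injection into `ℤ²` under
which the summand at `j` is at most `8 / (1 + ‖p‖_∞)`. Points of the opposite hemisphere are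
replaced by their negatives. Finally a set of `L` lattice points has `∑ 1 / (1 + ‖p‖_∞) ≲ √L`,
because the shell `‖p‖_∞ = n` has `8 n` points (`sum_inv_lattice_le`).
-/

open MeasureTheory Metric ENNReal

/-! ### Sums over separated points of the sphere -/

/-- The sum of `1 / (1 + ‖p‖_∞)` over a set of at most `L` lattice points is `O(√L)`: points with
`‖p‖_∞ ≥ R` contribute at most `L / (R + 1)`, the shells below `R` at most `9` each, and `R` is
taken to be the integer part of `√L`. -/
theorem sum_inv_lattice_le (S : Finset (ℤ × ℤ)) (L : ℕ) (hS : S.card ≤ L) :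
    ∑ p ∈ S, (1 : ℝ) / (1 + (max p.1.natAbs p.2.natAbs : ℕ)) ≤ 10 * √L := by
  classical
  set k : ℤ × ℤ → ℕ := fun p => max p.1.natAbs p.2.natAbs with hk
  set R := Nat.sqrt L with hR
  rcases Nat.eq_zero_or_pos L with h0 | hL
  · have : S = ∅ := by rw [← Finset.card_eq_zero]; omega
    simp [this]
  have hR1 : 1 ≤ R := Nat.sqrt_pos.2 hL
  have hsq1 : (R : ℝ) ≤ √L := by
    apply Real.le_sqrt_of_sq_le
    exact_mod_cast Nat.sqrt_le' L
  have hsq2 : √L ≤ (R : ℝ) + 1 := by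
    apply Real.sqrt_le_iff.2
    refine ⟨by positivity, ?_⟩
    exact_mod_cast (Nat.lt_succ_sqrt' L).le
  have hpos : 0 < √(L : ℝ) := Real.sqrt_pos.2 (by exact_mod_cast hL)
  rw [← Finset.sum_filter_add_sum_filter_not S (fun p => k p < R)]
  have h2 : ∑ p ∈ S with ¬ k p < R, (1 : ℝ) / (1 + (k p : ℕ)) ≤ √L := by
    have : ∀ p ∈ S.filter (fun p => ¬ k p < R), (1 : ℝ) / (1 + (k p : ℕ)) ≤ 1 / √L := by
      intro p hp
      have hp : R ≤ k p := not_lt.1 (Finset.mem_filter.1 hp).2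
      have hp' : (R : ℝ) ≤ k p := by exact_mod_cast hp
      apply one_div_le_one_div_of_le hpos
      linarith
    refine (Finset.sum_le_card_nsmul _ _ _ this).trans ?_
    rw [nsmul_eq_mul, mul_one_div, div_le_iff₀ hpos, Real.mul_self_sqrt (by positivity)]
    exact_mod_cast (Finset.card_filter_le _ _).trans hS
  have h1 : ∑ p ∈ S with k p < R, (1 : ℝ) / (1 + (k p : ℕ)) ≤ 9 * R := by
    rw [← Finset.sum_fiberwise_of_maps_to (t := Finset.range R) (g := k)
      (fun p hp => Finset.mem_range.2 (Finset.mem_filter.1 hp).2)]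
    have : ∀ n ∈ Finset.range R, ∑ p ∈ (S.filter (fun p => k p < R)) with k p = n,
        (1 : ℝ) / (1 + (k p : ℕ)) ≤ 9 := by
      intro n _
      have hsub : ((S.filter (fun p => k p < R)).filter (fun p => k p = n))
          ⊆ (Finset.box n : Finset (ℤ × ℤ)) := by
        intro p hp
        exact Int.mem_box.2 (Finset.mem_filter.1 hp).2
      have hcard := Finset.card_le_card hsub
      have hb : (Finset.box n : Finset (ℤ × ℤ)).card ≤ 8 * n + 1 := by
        rcases Nat.eq_zero_or_pos n with h | h
        · subst h; simp
        · rw [Int.card_box h.ne']; omega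
      rw [Finset.sum_congr rfl (g := fun _ => (1 : ℝ) / (1 + (n : ℝ)))
        (fun p hp => by rw [(Finset.mem_filter.1 hp).2])]
      rw [Finset.sum_const, nsmul_eq_mul, mul_one_div, div_le_iff₀ (by positivity)]
      have : (((S.filter (fun p => k p < R)).filter (fun p => k p = n)).card : ℝ) ≤ 8 * n + 1 := by
        exact_mod_cast hcard.trans hb
      have hn : (0 : ℝ) ≤ n := by positivity
      linarith
    refine (Finset.sum_le_card_nsmul _ _ _ this).trans ?_
    simp [mul_comm]
  have := add_le_add h1 h2
  refine this.trans ?_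
  linarith

/-- The inverse of stereographic projection from `(-1, 0, 0)`, which sends `(u, y, z)` to
`(y, z) / (1 + u)`, is `2`-Lipschitz: two unit vectors of the hemisphere `u ≥ 0` whose projections
differ by at most `η` in each coordinate have squared distance at most `8 η²`, stated here as a
bound on `1` minus their inner product. -/
theorem stereo_aux {u y z u' y' z' η : ℝ} (hn : u ^ 2 + y ^ 2 + z ^ 2 = 1)
    (hn' : u' ^ 2 + y' ^ 2 + z' ^ 2 = 1) (hu : 0 ≤ u) (hu' : 0 ≤ u')
    (hy : |y / (1 + u) - y' / (1 + u')| ≤ η) (hz : |z / (1 + u) - z' / (1 + u')| ≤ η) :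
    1 - (u * u' + y * y' + z * z') ≤ 4 * η ^ 2 := by
  have h1 : 0 < 1 + u := by linarith
  have h2 : 0 < 1 + u' := by linarith
  -- For vectors `v`, `v'` with respective projections `w`, `w'` the claim is the identity
  -- `‖w - w'‖² (1 + u) (1 + u') = ‖v - v'‖²`.
  have key : ((y / (1 + u) - y' / (1 + u')) ^ 2 + (z / (1 + u) - z' / (1 + u')) ^ 2)
      * ((1 + u) * (1 + u')) = 2 * (1 - (u * u' + y * y' + z * z')) := by
    have e1 : y ^ 2 + z ^ 2 = (1 - u) * (1 + u) := by linarith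
    have e2 : y' ^ 2 + z' ^ 2 = (1 - u') * (1 + u') := by linarith
    have : ((y / (1 + u) - y' / (1 + u')) ^ 2 + (z / (1 + u) - z' / (1 + u')) ^ 2)
      * ((1 + u) * (1 + u')) = (y ^ 2 + z ^ 2) / (1 + u) * (1 + u') +
        (y' ^ 2 + z' ^ 2) / (1 + u') * (1 + u) - 2 * (y * y' + z * z') := by
      field_simp
      ring
    rw [this, e1, e2]
    field_simp
    ring
  have hu1 : u ≤ 1 := by nlinarith [sq_nonneg y, sq_nonneg z]
  have hu1' : u' ≤ 1 := by nlinarith [sq_nonneg y', sq_nonneg z']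
  have a1 := sq_le_sq' (abs_le.1 hy).1 (abs_le.1 hy).2
  have a2 := sq_le_sq' (abs_le.1 hz).1 (abs_le.1 hz).2
  have a3 : (1 + u) * (1 + u') ≤ 4 := by nlinarith
  have : ((y / (1 + u) - y' / (1 + u')) ^ 2 + (z / (1 + u) - z' / (1 + u')) ^ 2)
      * ((1 + u) * (1 + u')) ≤ (η ^ 2 + η ^ 2) * 4 := by
    apply mul_le_mul (by linarith) a3 (by positivity) (by positivity)
  linarith

/-- A coordinate of the stereographic projection is at most the distance to the axis. -/
theorem abs_div_le_aux {u y z : ℝ} (hn : u ^ 2 + y ^ 2 + z ^ 2 = 1) (hu : 0 ≤ u) :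
    |y / (1 + u)| ≤ √(1 - u ^ 2) := by
  rw [abs_div, abs_of_pos (by linarith : 0 < 1 + u)]
  refine (div_le_self (abs_nonneg _) (by linarith)).trans ?_
  apply Real.abs_le_sqrt
  nlinarith [sq_nonneg z]

theorem natAbs_floor_le {w η : ℝ} (hη : 0 < η) : ((⌊w / η⌋.natAbs : ℕ) : ℝ) ≤ |w| / η + 1 := by
  rw [Nat.cast_natAbs, Int.cast_abs]
  have h1 := Int.floor_le (w / η)
  have h2 := Int.lt_floor_add_one (w / η)
  have h3 : |w| / η = |w / η| := by rw [abs_div, abs_of_pos hη]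
  rw [h3]
  refine abs_le.2 ⟨?_, ?_⟩
  · linarith [neg_abs_le (w / η)]
  · linarith [le_abs_self (w / η)]

/-- The vectors `(u j, y j, z j)` are separated unit vectors in the hemisphere `u ≥ 0`, and
`√(1 - u j ^ 2)` is the sine of the angle to the pole `(1, 0, 0)`. -/
theorem hemisphere_sum {ι : Type*} (J : Finset ι) (L : ℕ) (hJ : J.card ≤ L) {δ : ℝ} (hδ : 0 < δ)
    (u y z : ι → ℝ) (hn : ∀ j ∈ J, u j ^ 2 + y j ^ 2 + z j ^ 2 = 1) (hu : ∀ j ∈ J, 0 ≤ u j)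
    (hsep : ∀ j ∈ J, ∀ k ∈ J, j ≠ k → δ ^ 2 / 8 ≤ 1 - (u j * u k + y j * y k + z j * z k)) :
    ∑ j ∈ J, δ / (√(1 - u j ^ 2) + δ) ≤ 80 * √L := by
  classical
  set η := δ / 8 with hη
  have hη0 : 0 < η := by positivity
  -- The grid cell of the stereographic projection. Two points in one cell have inner product at
  -- least `1 - 4 η² = 1 - δ² / 16`, against the separation `δ² / 8`.
  set c : ι → ℤ × ℤ := fun j => (⌊y j / (1 + u j) / η⌋, ⌊z j / (1 + u j) / η⌋) with hc
  have close : ∀ a b : ℝ, ⌊a / η⌋ = ⌊b / η⌋ → |a - b| ≤ η := by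
    intro a b h
    have := Int.abs_sub_lt_one_of_floor_eq_floor h
    rw [← sub_div, abs_div, abs_of_pos hη0, div_lt_one hη0] at this
    exact this.le
  have hinj : Set.InjOn c J := by
    intro j hj k hk hjk
    by_contra hne
    have h1 := hsep j hj k hk hne
    have h2 := stereo_aux (hn j hj) (hn k hk) (hu j hj) (hu k hk)
      (close _ _ (congrArg Prod.fst hjk)) (close _ _ (congrArg Prod.snd hjk))
    rw [hη] at h2
    nlinarith [sq_pos_of_pos hδ]
  have hterm : ∀ j ∈ J, δ / (√(1 - u j ^ 2) + δ) ≤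
      8 * ((1 : ℝ) / (1 + (max (c j).1.natAbs (c j).2.natAbs : ℕ))) := by
    intro j hj
    have hs := Real.sqrt_nonneg (1 - u j ^ 2)
    have b1 := abs_div_le_aux (hn j hj) (hu j hj)
    have b2 := abs_div_le_aux (u := u j) (y := z j) (z := y j) (by linarith [hn j hj]) (hu j hj)
    have f1 : ((c j).1.natAbs : ℝ) ≤ √(1 - u j ^ 2) / η + 1 :=
      (natAbs_floor_le hη0).trans (by gcongr)
    have f2 : ((c j).2.natAbs : ℝ) ≤ √(1 - u j ^ 2) / η + 1 :=
      (natAbs_floor_le hη0).trans (by gcongr)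
    have f3 : ((max (c j).1.natAbs (c j).2.natAbs : ℕ) : ℝ) ≤ √(1 - u j ^ 2) / η + 1 := by
      rw [Nat.cast_max]; exact max_le f1 f2
    rw [mul_one_div, div_le_div_iff₀ (by positivity) (by positivity)]
    have : δ * (√(1 - u j ^ 2) / η) = 8 * √(1 - u j ^ 2) := by
      rw [hη]; field_simp
    nlinarith
  refine (Finset.sum_le_sum hterm).trans ?_
  rw [← Finset.mul_sum]
  have := sum_inv_lattice_le (J.image c) L (Finset.card_image_le.trans hJ)
  rw [Finset.sum_image hinj] at this
  linarith

theorem sphere_sum {ι : Type*} (J : Finset ι) (L : ℕ) (hJ : J.card ≤ L) {δ : ℝ} (hδ : 0 < δ)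
    (u y z : ι → ℝ) (hn : ∀ j ∈ J, u j ^ 2 + y j ^ 2 + z j ^ 2 = 1)
    (hsep : ∀ j ∈ J, ∀ k ∈ J, j ≠ k → δ ^ 2 / 8 ≤ 1 - (u j * u k + y j * y k + z j * z k)) :
    ∑ j ∈ J, δ / (√(1 - u j ^ 2) + δ) ≤ 160 * √L := by
  classical
  rw [← Finset.sum_filter_add_sum_filter_not J (fun j => 0 ≤ u j)]
  have h1 := hemisphere_sum (J.filter (fun j => 0 ≤ u j)) L
    ((Finset.card_filter_le _ _).trans hJ) hδ u y z
    (fun j hj => hn j (Finset.mem_filter.1 hj).1) (fun j hj => (Finset.mem_filter.1 hj).2)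
    (fun j hj k hk => hsep j (Finset.mem_filter.1 hj).1 k (Finset.mem_filter.1 hk).1)
  -- Negating all vectors keeps pairwise inner products and maps `u < 0` to `u > 0`.
  have h2 := hemisphere_sum (J.filter (fun j => ¬ 0 ≤ u j)) L
    ((Finset.card_filter_le _ _).trans hJ) hδ (-u) (-y) (-z)
    (fun j hj => by simpa using hn j (Finset.mem_filter.1 hj).1)
    (fun j hj => by simpa using (not_le.1 (Finset.mem_filter.1 hj).2).le)
    (fun j hj k hk => by
      simpa using hsep j (Finset.mem_filter.1 hj).1 k (Finset.mem_filter.1 hk).1)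
  simp only [Pi.neg_apply, neg_sq] at h2
  linarith

/-! ### Tubes and their intersections -/

/-- Euclidean three-space. -/
abbrev E3 := EuclideanSpace ℝ (Fin 3)

/-- A set contained in a box with half-side `A i` in the direction `e i` of an orthonormal basis has
volume at most the product of the `2 * A i`. -/
theorem volume_box_le (e : OrthonormalBasis (Fin 3) ℝ E3) (x₀ : E3) (S : Set E3) (A : Fin 3 → ℝ)
    (hS : ∀ x ∈ S, ∀ i, |inner ℝ (e i) (x - x₀)| ≤ A i) :
    volume S ≤ ∏ i, ENNReal.ofReal (2 * A i) := by
  have hmp := (PiLp.volume_preserving_ofLp (Fin 3)).comp e.measurePreserving_repr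
  have hsub : S ⊆ (WithLp.ofLp ∘ e.repr) ⁻¹'
      Set.Icc (fun i => inner ℝ (e i) x₀ - A i) (fun i => inner ℝ (e i) x₀ + A i) := by
    intro x hx
    have h := fun i => abs_le.1 (hS x hx i)
    simp only [inner_sub_right] at h
    refine ⟨fun i => ?_, fun i => ?_⟩
    · simp only [Function.comp, e.repr_apply_apply]
      linarith [(h i).1]
    · simp only [Function.comp, e.repr_apply_apply]
      linarith [(h i).2]
  refine (measure_mono hsub).trans ?_
  rw [hmp.measure_preimage measurableSet_Icc.nullMeasurableSet, Real.volume_Icc_pi]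
  apply le_of_eq
  congr 1
  ext i
  congr 1
  ring

theorem mem_tube {a b x : E3} {δ : ℝ} (hδ : 0 < δ) (hx : x ∈ cthickening δ (segment ℝ a b)) :
    ∃ t ∈ Set.Icc (0 : ℝ) 1, ‖x - (a + t • (b - a))‖ ≤ δ := by
  have hc : IsCompact (segment ℝ a b) := by
    rw [segment_eq_image']
    exact isCompact_Icc.image (by fun_prop)
  rw [hc.cthickening_eq_biUnion_closedBall hδ.le] at hx
  simp only [Set.mem_iUnion] at hx
  obtain ⟨y, hy, hxy⟩ := hx
  rw [segment_eq_image'] at hy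
  obtain ⟨t, ht, rfl⟩ := hy
  exact ⟨t, ht, by rwa [mem_closedBall, dist_eq_norm] at hxy⟩

/-- Two points of a tube differ by a multiple, of length at most `1`, of its direction, up to an
error of `2 δ`. -/
theorem tube_diff {a b x x' : E3} {δ : ℝ} (hδ : 0 < δ) (hx : x ∈ cthickening δ (segment ℝ a b))
    (hx' : x' ∈ cthickening δ (segment ℝ a b)) :
    ∃ t : ℝ, |t| ≤ 1 ∧ ‖(x - x') - t • (b - a)‖ ≤ 2 * δ := by
  obtain ⟨t, ht, h⟩ := mem_tube hδ hx
  obtain ⟨t', ht', h'⟩ := mem_tube hδ hx'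
  refine ⟨t - t', abs_le.2 ⟨by linarith [ht.1, ht'.2], by linarith [ht.2, ht'.1]⟩, ?_⟩
  have : (x - x') - (t - t') • (b - a) = (x - (a + t • (b - a))) - (x' - (a + t' • (b - a))) := by
    rw [sub_smul]; abel
  rw [this]
  exact (norm_sub_le _ _).trans (by linarith)

/-- If `x`, `x₀` lie in both tubes, then `x - x₀` is within `2 δ` of `t • e 0` and of `t' • q`, where
`q` is the second direction. Hence the coordinates of `x - x₀` orthogonal to `e 0` are at most `2 δ`,
and `|t| s ≤ ‖t • e 0 - t' • q‖ ≤ 4 δ` for the sine `s` of the angle, which bounds the first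
coordinate. -/
theorem volume_tube_inter (e : OrthonormalBasis (Fin 3) ℝ E3) {a b a' b' : E3} {δ : ℝ}
    (hδ : 0 < δ) (hδ1 : δ < 1) (he : e 0 = b - a) (hb' : ‖b' - a'‖ = 1) :
    volume (cthickening δ (segment ℝ a b) ∩ cthickening δ (segment ℝ a' b')) ≤
      ENNReal.ofReal (288 * δ ^ 2 * (δ / (√(1 - (inner ℝ (e 0) (b' - a')) ^ 2) + δ))) := by
  set q := b' - a' with hq
  set u : ℝ := inner ℝ (e 0) q with hu
  set s := √(1 - u ^ 2) with hs
  have hs0 : 0 ≤ s := Real.sqrt_nonneg _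
  have hs1 : s ≤ 1 := by
    exact Real.sqrt_le_iff.2 ⟨zero_le_one, by nlinarith [sq_nonneg u]⟩
  have hu1 : u ^ 2 ≤ 1 := by
    have := abs_real_inner_le_norm (e 0) q
    rw [hb', e.norm_eq_one, mul_one] at this
    exact (sq_le_one_iff_abs_le_one _).2 this
  have hss : s ^ 2 = 1 - u ^ 2 := Real.sq_sqrt (by linarith)
  rcases Set.eq_empty_or_nonempty
    (cthickening δ (segment ℝ a b) ∩ cthickening δ (segment ℝ a' b')) with h0 | ⟨x₀, hx₀, hx₀'⟩
  · simp [h0]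
  have hbox := volume_box_le e x₀
    (cthickening δ (segment ℝ a b) ∩ cthickening δ (segment ℝ a' b'))
    ![9 * (δ / (s + δ)), 2 * δ, 2 * δ] ?_
  · refine hbox.trans (le_of_eq ?_)
    simp only [Fin.prod_univ_three, Matrix.cons_val_zero, Matrix.cons_val_one, Matrix.cons_val]
    rw [← ENNReal.ofReal_mul (by positivity), ← ENNReal.ofReal_mul (by positivity)]
    congr 1
    ring
  rintro x ⟨hx, hx'⟩
  obtain ⟨t, ht, h⟩ := tube_diff hδ hx hx₀
  obtain ⟨t', ht', h'⟩ := tube_diff hδ hx' hx₀'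
  rw [← he] at h
  rw [← hq] at h'
  have hg : ‖t • e 0 - t' • q‖ ≤ 4 * δ := by
    have : t • e 0 - t' • q = ((x - x₀) - t' • q) - ((x - x₀) - t • e 0) := by abel
    rw [this]
    exact (norm_sub_le _ _).trans (by linarith)
  have hts : |t| * s ≤ 4 * δ := by
    apply abs_le_of_sq_le_sq' _ (by linarith) |>.2
    have h1 : ‖t • e 0 - t' • q‖ ^ 2 = t ^ 2 - 2 * (t * t' * u) + t' ^ 2 := by
      rw [norm_sub_sq_real, norm_smul, norm_smul, hb', e.norm_eq_one, real_inner_smul_left,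
        real_inner_smul_right, ← hu]
      simp only [Real.norm_eq_abs, mul_one, sq_abs]
      ring
    have h2 : ‖t • e 0 - t' • q‖ ^ 2 ≤ (4 * δ) ^ 2 := by gcongr
    rw [mul_pow, sq_abs, hss]
    -- Completing the square in `t'` leaves `t² (1 - u²)`.
    nlinarith [sq_nonneg (t' - t * u)]
  have hco : ∀ i, |inner ℝ (e i) (x - x₀ - t • e 0)| ≤ 2 * δ := by
    intro i
    refine (abs_real_inner_le_norm _ _).trans ?_
    rw [e.norm_eq_one, one_mul]
    exact h
  have horth : ∀ i, i ≠ 0 → |inner ℝ (e i) (x - x₀)| ≤ 2 * δ := by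
    intro i hi
    have := hco i
    rwa [inner_sub_right, real_inner_smul_right, e.inner_eq_zero hi, mul_zero, sub_zero] at this
  intro i
  fin_cases i
  · have h0 := hco 0
    rw [inner_sub_right, real_inner_smul_right, e.inner_eq_one, mul_one] at h0
    have h1 : |inner ℝ (e 0) (x - x₀)| ≤ |t| + 2 * δ := by
      have := abs_sub_abs_le_abs_sub (inner ℝ (e 0) (x - x₀)) t
      linarith
    show |inner ℝ (e 0) (x - x₀)| ≤ 9 * (δ / (s + δ))
    refine h1.trans ?_
    -- `|t| s ≤ 4 δ`, `|t| ≤ 1` and `s + δ ≤ 2` give `(|t| + 2 δ) (s + δ) ≤ 9 δ`.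
    rw [mul_div_assoc', le_div_iff₀ (by positivity)]
    nlinarith
  · exact horth 1 (by decide)
  · exact horth 2 (by decide)

theorem inner_le_of_angle {p q : E3} {δ : ℝ} (hδ : 0 < δ) (hp : ‖p‖ = 1) (hq : ‖q‖ = 1)
    (h : δ ≤ InnerProductGeometry.angle p q) : δ ^ 2 / 8 ≤ 1 - inner ℝ p q := by
  have h1 := InnerProductGeometry.cos_angle p q
  rw [hp, hq, mul_one, div_one] at h1
  rw [← h1]
  set θ := InnerProductGeometry.angle p q
  have hθ : |θ| ≤ Real.pi := abs_le.2 ⟨by linarith [Real.pi_pos], InnerProductGeometry.angle_le_pi _ _⟩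
  have h2 := Real.cos_le_one_sub_mul_cos_sq hθ
  have h3 : (1 : ℝ) / 8 ≤ 2 / Real.pi ^ 2 := by
    rw [div_le_div_iff₀ (by norm_num) (by positivity)]
    nlinarith [Real.pi_le_four, Real.pi_pos]
  have h4 : δ ^ 2 ≤ θ ^ 2 := by gcongr
  have := mul_le_mul h3 h4 (by positivity) (by positivity)
  linarith

theorem exists_basis (p : E3) (hp : ‖p‖ = 1) : ∃ e : OrthonormalBasis (Fin 3) ℝ E3, e 0 = p := by
  have ho : Orthonormal ℝ (Set.domRestrict {(0 : Fin 3)} (fun _ : Fin 3 => p)) := by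
    constructor
    · exact fun _ => hp
    · rintro ⟨i, hi⟩ ⟨j, hj⟩ hij
      exact (hij (Subtype.ext (hi.trans hj.symm))).elim
  obtain ⟨e, he⟩ := ho.exists_orthonormalBasis_extension_of_card_eq (by simp)
  exact ⟨e, he 0 rfl⟩

/-! ### The second moment of the multiplicity function -/

/-- Markov's inequality for the square of the multiplicity function of a family of sets. -/
theorem markov_mult {L : ℕ} (T : Fin L → Set E3) (hT : ∀ i, MeasurableSet (T i)) {r : ℝ}
    (hr : 0 < r) :
    ENNReal.ofReal (r ^ 2) * volume {x | r ≤ ({i : Fin L | x ∈ T i}.ncard : ℝ)} ≤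
      ∑ i, ∑ j, volume (T i ∩ T j) := by
  classical
  set f : E3 → ℝ≥0∞ := fun x => ∑ i, ∑ j, (T i ∩ T j).indicator 1 x with hf
  have hm : Measurable f := by
    refine Finset.measurable_sum _ fun i _ => Finset.measurable_sum _ fun j _ => ?_
    exact measurable_one.indicator ((hT i).inter (hT j))
  have hint : ∫⁻ x, f x = ∑ i, ∑ j, volume (T i ∩ T j) := by
    simp only [hf]
    rw [lintegral_finsetSum _ (fun i _ => Finset.measurable_sum _ fun j _ =>
      measurable_one.indicator ((hT i).inter (hT j)))]
    refine Finset.sum_congr rfl fun i _ => ?_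
    rw [lintegral_finsetSum _ (fun j _ => measurable_one.indicator ((hT i).inter (hT j)))]
    refine Finset.sum_congr rfl fun j _ => ?_
    rw [lintegral_indicator_one ((hT i).inter (hT j))]
  have hfx : ∀ x, f x = (({i : Fin L | x ∈ T i}.ncard : ℕ) : ℝ≥0∞) ^ 2 := by
    intro x
    have h1 : ((({i : Fin L | x ∈ T i}.ncard : ℕ)) : ℝ≥0∞) = ∑ i, (T i).indicator 1 x := by
      rw [Set.ncard_eq_toFinset_card']
      simp [Set.indicator_apply]
    rw [h1, sq, Finset.sum_mul_sum]
    simp only [hf, Set.inter_indicator_one, Pi.mul_apply]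
  rw [← hint]
  refine le_trans ?_ (mul_meas_ge_le_lintegral hm (ENNReal.ofReal (r ^ 2)))
  gcongr with x
  intro hx
  rw [hfx, ENNReal.ofReal_pow hr.le]
  gcongr
  exact ENNReal.ofReal_le_of_le_toReal (by simpa using hx)

/-- There is an absolute constant `C > 0` such that for unit segments in `ℝ³` with pairwise
`δ`-separated directions, `λ(P_r) ≤ C δ² L^{3/2} / r²` for all `r ≥ 1`. -/
theorem stmt12 :
    ∃ C : ℝ, 0 < C ∧ ∀ δ : ℝ, δ ∈ Set.Ioo (0 : ℝ) 1 →
      ∀ (L : ℕ) (a b : Fin L → EuclideanSpace ℝ (Fin 3)),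
        (∀ i, dist (a i) (b i) = 1) →
        (∀ i j, i ≠ j → δ ≤ InnerProductGeometry.angle (b i - a i) (b j - a j)) →
        ∀ r : ℝ, 1 ≤ r →
          (volume : Measure (EuclideanSpace ℝ (Fin 3)))
              {x | r ≤ ({i : Fin L | x ∈ cthickening δ (segment ℝ (a i) (b i))}.ncard : ℝ)}
            ≤ ENNReal.ofReal (C * δ ^ 2 * (L : ℝ) ^ ((3 : ℝ) / 2) / r ^ 2) := by
  -- `46080 = 288 * 160`, the constants of `volume_tube_inter` and `sphere_sum`.
  refine ⟨46080, by norm_num, ?_⟩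
  rintro δ ⟨hδ, hδ1⟩ L a b hab hang r hr
  have hr2 : 0 < r ^ 2 := by positivity
  have hunit : ∀ i, ‖b i - a i‖ = 1 := fun i => by rw [← dist_eq_norm, dist_comm]; exact hab i
  have hrow : ∀ i, ∑ j, volume (cthickening δ (segment ℝ (a i) (b i)) ∩
      cthickening δ (segment ℝ (a j) (b j))) ≤ ENNReal.ofReal (46080 * δ ^ 2 * √L) := by
    intro i
    obtain ⟨e, he⟩ := exists_basis (b i - a i) (hunit i)
    refine (Finset.sum_le_sum fun j _ => volume_tube_inter e hδ hδ1 he (hunit j)).trans ?_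
    rw [← ENNReal.ofReal_sum_of_nonneg (fun j _ => by positivity), ← Finset.mul_sum]
    apply ENNReal.ofReal_le_ofReal
    have hinner : ∀ j k, inner ℝ (b j - a j) (b k - a k) =
        inner ℝ (e 0) (b j - a j) * inner ℝ (e 0) (b k - a k) +
        inner ℝ (e 1) (b j - a j) * inner ℝ (e 1) (b k - a k) +
        inner ℝ (e 2) (b j - a j) * inner ℝ (e 2) (b k - a k) := by
      intro j k
      rw [← e.sum_inner_mul_inner, Fin.sum_univ_three]
      simp only [real_inner_comm]
    have hsum := sphere_sum Finset.univ L (by simp) hδ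
      (fun j => inner ℝ (e 0) (b j - a j)) (fun j => inner ℝ (e 1) (b j - a j))
      (fun j => inner ℝ (e 2) (b j - a j))
      (fun j _ => by
        have := hinner j j
        rw [real_inner_self_eq_norm_sq, hunit j] at this
        linarith)
      (fun j _ k _ hjk => by
        rw [← hinner j k]
        exact inner_le_of_angle hδ (hunit j) (hunit k) (hang j k hjk))
    calc _ ≤ 288 * δ ^ 2 * (160 * √L) := by gcongr
      _ = _ := by ring
  have hL : (L : ℝ) * √L = (L : ℝ) ^ ((3 : ℝ) / 2) := by
    rw [show (3 : ℝ) / 2 = 1 + 1 / 2 by norm_num, Real.rpow_add_of_nonneg (by positivity)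
      (by norm_num) (by norm_num), Real.rpow_one, Real.sqrt_eq_rpow]
  have hmain := markov_mult (fun i => cthickening δ (segment ℝ (a i) (b i)))
    (fun i => isClosed_cthickening.measurableSet) (lt_of_lt_of_le one_pos hr)
  have htot := hmain.trans (Finset.sum_le_sum fun i _ => hrow i)
  rw [Finset.sum_const, Finset.card_univ, Fintype.card_fin, nsmul_eq_mul,
    ← ENNReal.ofReal_natCast, ← ENNReal.ofReal_mul (by positivity),
    show (L : ℝ) * (46080 * δ ^ 2 * √L) = 46080 * δ ^ 2 * (L * √L) by ring, hL] at htot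
  rw [ENNReal.ofReal_div_of_pos hr2, ENNReal.le_div_iff_mul_le (Or.inl (ENNReal.ofReal_pos.2 hr2).ne')
    (Or.inl ENNReal.ofReal_ne_top), mul_comm]
  exact htot
end

section
/- There is an absolute constant C > 0 with the following property. Let δ ∈ (0,1), let l₁,…,l_L be unit line segments in ℝ³, and let r ≥ 2 be an integer. Then λ(P_r) ≤ C r^{−2} ∑_{1≤i<j≤L} λ(l_i^{3δ} ∩ l_j^{3δ}), where P_r is the set of points of ℝ³ belonging to at least r of the tubes l₁^δ,…,l_L^δ. -/
open MeasureTheory Metric ENNReal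

/-!
The estimate is Markov's inequality applied to the function
`f x = #{(i, j) : i < j, x ∈ l_i^{3δ} ∩ l_j^{3δ}}`, whose integral is the sum on the right-hand side.
At a point lying in at least `r ≥ 2` of the `δ`-tubes, hence in at least `r` of the `3δ`-tubes,
one has `f x ≥ r (r - 1) / 2 ≥ r ^ 2 / 4` (`sq_le_four_mul_card_pairs`), so `C = 4` works.
-/

/-- A set of at least `r ≥ 2` indices has at least `r ^ 2 / 4` increasing pairs: the off-diagonal
pairs split into the increasing and the decreasing ones, which are equinumerous. -/
lemma sq_le_four_mul_card_pairs {L : ℕ} (S : Finset (Fin L)) {r : ℕ} (hr : 2 ≤ r)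
    (hS : r ≤ S.card) :
    r ^ 2 ≤ 4 * ((S ×ˢ S).filter (fun p => p.1 < p.2)).card := by
  have hswap : ((S ×ˢ S).filter (fun p => p.2 < p.1)).card
      ≤ ((S ×ˢ S).filter (fun p => p.1 < p.2)).card := by
    refine Finset.card_le_card_of_injOn Prod.swap ?_ Prod.swap_injective.injOn
    intro p hp
    simp at hp ⊢
    tauto
  have hsplit : S.offDiag ⊆ (S ×ˢ S).filter (fun p => p.1 < p.2) ∪
      (S ×ˢ S).filter (fun p => p.2 < p.1) := by
    intro p hp
    simp only [Finset.mem_offDiag, Finset.mem_union, Finset.mem_filter,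
      Finset.mem_product] at hp ⊢
    rcases lt_or_gt_of_ne hp.2.2 with h | h <;> tauto
  have hcard := (Finset.card_le_card hsplit).trans (Finset.card_union_le _ _)
  rw [Finset.offDiag_card] at hcard
  have hmul : S.card * S.card ≤ S.card +
    2 * ((S ×ˢ S).filter (fun p => p.1 < p.2)).card := by omega
  nlinarith

/-- There is an absolute constant `C > 0` such that for unit segments in `ℝ³` and any integer
`r ≥ 2`, `λ(P_r) ≤ C r⁻² ∑_{i<j} λ(l_i^{3δ} ∩ l_j^{3δ})`, where `P_r` is the set of points in at
least `r` of the `δ`-tubes. -/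
theorem stmt13 :
    ∃ C : ℝ, 0 < C ∧ ∀ δ : ℝ, δ ∈ Set.Ioo (0 : ℝ) 1 →
      ∀ (L : ℕ) (a b : Fin L → EuclideanSpace ℝ (Fin 3)),
        (∀ i, dist (a i) (b i) = 1) →
        ∀ r : ℕ, 2 ≤ r →
          (volume : Measure (EuclideanSpace ℝ (Fin 3)))
              {x | r ≤ {i : Fin L | x ∈ cthickening δ (segment ℝ (a i) (b i))}.ncard}
            ≤ ENNReal.ofReal (C / (r : ℝ) ^ 2) *
                ∑ p ∈ Finset.univ.filter (fun p : Fin L × Fin L => p.1 < p.2),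
                  (volume : Measure (EuclideanSpace ℝ (Fin 3)))
                    (cthickening (3 * δ) (segment ℝ (a p.1) (b p.1)) ∩
                      cthickening (3 * δ) (segment ℝ (a p.2) (b p.2))) := by
  classical
  refine ⟨4, by norm_num, ?_⟩
  intro δ hδ L a b _ r hr
  set T : Fin L → Set (EuclideanSpace ℝ (Fin 3)) :=
    fun i => cthickening (3 * δ) (segment ℝ (a i) (b i)) with hT
  have hmeas : ∀ p : Fin L × Fin L, MeasurableSet (T p.1 ∩ T p.2) := fun p =>
    (isClosed_cthickening.inter isClosed_cthickening).measurableSet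
  set F := Finset.univ.filter (fun p : Fin L × Fin L => p.1 < p.2) with hF
  let f : EuclideanSpace ℝ (Fin 3) → ℝ≥0∞ :=
    fun x => ∑ p ∈ F, (T p.1 ∩ T p.2).indicator 1 x
  have hf : Measurable f :=
    Finset.measurable_sum _ fun p _ => measurable_one.indicator (hmeas p)
  have hint : ∫⁻ x, f x = ∑ p ∈ F, volume (T p.1 ∩ T p.2) := by
    rw [lintegral_finsetSum _ fun p _ => measurable_one.indicator (hmeas p)]
    exact Finset.sum_congr rfl fun p _ => lintegral_indicator_one (hmeas p)
  have hr0 : (0 : ℝ) < (r : ℝ) ^ 2 := by positivity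
  have hsub : {x | r ≤ {i : Fin L | x ∈ cthickening δ (segment ℝ (a i) (b i))}.ncard} ⊆
      {x | ENNReal.ofReal ((r : ℝ) ^ 2 / 4) ≤ f x} := by
    intro x hx
    simp only [Set.mem_ofPred_eq] at hx ⊢
    set S := Finset.univ.filter (fun i : Fin L => x ∈ T i) with hS
    have hrS : r ≤ S.card := by
      refine hx.trans ?_
      rw [← Set.ncard_coe_finset]
      refine Set.ncard_le_ncard ?_ (Finset.finite_toSet S)
      intro i hi
      have hi' : x ∈ T i := cthickening_mono (by linarith [hδ.1]) _ hi
      exact Finset.mem_coe.2 (Finset.mem_filter.2 ⟨Finset.mem_univ i, hi'⟩)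
    have hcount : f x = (((S ×ˢ S).filter (fun p => p.1 < p.2)).card : ℝ≥0∞) := by
      simp only [f, Set.indicator_apply, Pi.one_apply, Finset.sum_boole]
      congr 2
      ext p
      simp [hF, hS, and_comm]
    have h4 := sq_le_four_mul_card_pairs S hr hrS
    rw [hcount, ← ENNReal.ofReal_natCast]
    apply ENNReal.ofReal_le_ofReal
    have h4' : (r : ℝ) ^ 2 ≤ 4 * (((S ×ˢ S).filter (fun p => p.1 < p.2)).card : ℝ) := by
      exact_mod_cast h4
    linarith
  have hpos : (0 : ℝ) < (r : ℝ) ^ 2 / 4 := by positivity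
  calc volume {x | r ≤ {i : Fin L | x ∈ cthickening δ (segment ℝ (a i) (b i))}.ncard}
      ≤ volume {x | ENNReal.ofReal ((r : ℝ) ^ 2 / 4) ≤ f x} := measure_mono hsub
    _ ≤ (∫⁻ x, f x) / ENNReal.ofReal ((r : ℝ) ^ 2 / 4) :=
        meas_ge_le_lintegral_div hf.aemeasurable (by simpa using hpos) ENNReal.ofReal_ne_top
    _ = ENNReal.ofReal (4 / (r : ℝ) ^ 2) * ∑ p ∈ F, volume (T p.1 ∩ T p.2) := by
        rw [hint, div_eq_mul_inv, mul_comm, ← ENNReal.ofReal_inv_of_pos hpos, inv_div]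
end

section
/- Let δ ∈ (0,1/2), let c > 0 and C₀ > 0, and let l₁,…,l_L be unit line segments in ℝ³ with pairwise δ-separated directions and L ≥ c δ^{−2}. Assume that for every real r ≥ 2 one has λ({x ∈ ℝ³ : x belongs to at least r of the tubes l₁^{3δ},…,l_L^{3δ}}) ≤ C₀ δ³ L^{3/2} / r^{3/2}. Then λ(⋃_{i=1}^{L} l_i^{3δ}) ≥ C (log(1/δ))^{−2}, where C > 0 is a constant depending only on c and C₀ (and not on δ or on the choice of segments). -/
/-!
Write `f x` for the number of tubes containing `x`, and `U` for their union. Each tube contains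
about `1 / δ` disjoint balls of radius `δ / 2`, so it has volume at least `δ² / 4`, and hence
`∫ f ≥ M / 4` with `M = L δ²`. By the layer-cake formula, split at height `R`,
`∫ f ≤ R λ(U) + ∫_R^∞ λ(f ≥ t) dt ≤ R λ(U) + 2 C₀ M^{3/2} R^{-1/2}`,
because `t ^ (-3/2)` is integrable at infinity. Taking `R = K M` with
`K = 2 / c + (16 C₀)²` makes `R ≥ 2` and the last term at most `M / 8`, so that
`λ(U) ≥ 1 / (8 K)`. This bound is uniform in `δ`; as `log (1 / δ) ≥ log 2`, the logarithmic
bound follows.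
-/

open MeasureTheory Metric ENNReal

/-- The volume of a `3δ`-tube around a unit segment is at least `δ² / 4`: it contains
`⌊1 / δ⌋` disjoint balls of radius `δ / 2` centred on the segment. -/
lemma tube_volume_ge (δ : ℝ) (h0 : 0 < δ) (h1 : δ < 1 / 2) (a b : EuclideanSpace ℝ (Fin 3))
    (hab : dist a b = 1) :
    ENNReal.ofReal (δ ^ 2 / 4) ≤ volume (cthickening (3 * δ) (segment ℝ a b)) := by
  set n : ℕ := ⌊1 / δ⌋₊ with hn
  have hd : (2 : ℝ) ≤ 1 / δ := by rw [le_div_iff₀ h0]; linarith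
  have hn1 : (n : ℝ) ≤ 1 / δ := Nat.floor_le (by positivity)
  have hn2 : 1 / δ < n + 1 := Nat.lt_floor_add_one _
  have hnpos : (0 : ℝ) < n := by linarith
  have hnδ : (n : ℝ) * δ ≤ 1 := by rwa [le_div_iff₀ h0] at hn1
  have hnδ2 : 1 / 2 ≤ (n : ℝ) * δ := by
    rw [div_lt_iff₀ h0] at hn2
    linarith
  let p : Fin n → EuclideanSpace ℝ (Fin 3) := fun k => AffineMap.lineMap a b ((k : ℝ) / n)
  have hp : ∀ k, p k ∈ segment ℝ a b := fun k => by
    rw [segment_eq_image_lineMap]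
    refine ⟨(k : ℝ) / n, ⟨by positivity, ?_⟩, rfl⟩
    rw [div_le_one hnpos]
    exact_mod_cast k.2.le
  have hdisj : Pairwise (Function.onFun Disjoint fun k => ball (p k) (δ / 2)) := by
    intro k l hkl
    apply ball_disjoint_ball
    rw [dist_lineMap_lineMap, hab, mul_one, Real.dist_eq, ← sub_div, abs_div, Nat.abs_cast,
      le_div_iff₀ hnpos]
    have h : (1 : ℤ) ≤ |(k : ℤ) - (l : ℤ)| := by
      apply Int.one_le_abs
      intro h
      apply hkl
      ext
      omega
    have h' : (1 : ℝ) ≤ |(k : ℝ) - (l : ℝ)| := by exact_mod_cast h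
    linarith
  have hsub : (⋃ k, ball (p k) (δ / 2)) ⊆ cthickening (3 * δ) (segment ℝ a b) := by
    refine Set.iUnion_subset fun k => ?_
    refine (ball_subset_closedBall.trans (closedBall_subset_closedBall ?_)).trans
      (closedBall_subset_cthickening (hp k) _)
    linarith
  refine le_trans ?_ (measure_mono hsub)
  rw [measure_iUnion hdisj fun k => measurableSet_ball, tsum_fintype]
  simp only [EuclideanSpace.volume_ball_fin_three, Finset.sum_const, Finset.card_univ,
    Fintype.card_fin, nsmul_eq_mul]
  rw [← ENNReal.ofReal_pow (by positivity), ← ENNReal.ofReal_mul (by positivity),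
    ← ENNReal.ofReal_natCast, ← ENNReal.ofReal_mul (by positivity)]
  apply ENNReal.ofReal_le_ofReal
  have hpi := Real.pi_gt_three
  have h2 : δ ^ 2 / 4 = 1 / 2 * (δ ^ 2 / 6 * 3) := by ring
  have h3 : (n : ℝ) * ((δ / 2) ^ 3 * (Real.pi * 4 / 3)) = (n * δ) * (δ ^ 2 / 6 * Real.pi) := by
    ring
  rw [h2, h3]
  gcongr

/-- Layer-cake bound: a decay `λ(f ≥ t) ≤ A t ^ (-3/2)` for `t ≥ R` controls the part of the
integral above height `R`. -/
lemma lintegral_le_of_tail {α : Type*} [MeasurableSpace α] (μ : Measure α) (f : α → ℝ)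
    (hf : Measurable f) (hf0 : ∀ x, 0 ≤ f x) (U : Set α) (hU : ∀ x, 0 < f x → x ∈ U)
    (A R : ℝ) (hA : 0 ≤ A) (hR : 0 < R)
    (h : ∀ t, R ≤ t → μ {x | t ≤ f x} ≤ ENNReal.ofReal (A / t ^ ((3 : ℝ) / 2))) :
    ∫⁻ x, ENNReal.ofReal (f x) ∂μ
      ≤ ENNReal.ofReal R * μ U + ENNReal.ofReal (2 * A / R ^ ((1 : ℝ) / 2)) := by
  rw [lintegral_eq_lintegral_meas_le μ (Filter.Eventually.of_forall hf0) hf.aemeasurable,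
    ← Set.Ioc_union_Ioi_eq_Ioi hR.le, lintegral_union measurableSet_Ioi
      (Set.Ioc_disjoint_Ioi le_rfl)]
  gcongr
  · calc ∫⁻ t in Set.Ioc 0 R, μ {x | t ≤ f x} ≤ ∫⁻ t in Set.Ioc 0 R, μ U := by
          refine setLIntegral_mono measurable_const fun t ht => measure_mono fun x hx => ?_
          exact hU x (ht.1.trans_le hx)
      _ = ENNReal.ofReal R * μ U := by
          rw [setLIntegral_const, Real.volume_Ioc, sub_zero, mul_comm]
  · have hint : IntegrableOn (fun t : ℝ => A * t ^ (-((3 : ℝ) / 2))) (Set.Ioi R) :=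
      (integrableOn_Ioi_rpow_of_lt (by norm_num) hR).const_mul A
    calc ∫⁻ t in Set.Ioi R, μ {x | t ≤ f x}
        ≤ ∫⁻ t in Set.Ioi R, ENNReal.ofReal (A * t ^ (-((3 : ℝ) / 2))) := by
          refine setLIntegral_mono (by fun_prop) fun t ht => ?_
          have ht' : R < t := ht
          rw [Real.rpow_neg (hR.trans ht').le, ← div_eq_mul_inv]
          exact h t ht'.le
      _ = ENNReal.ofReal (∫ t in Set.Ioi R, A * t ^ (-((3 : ℝ) / 2))) := by
          rw [ofReal_integral_eq_lintegral_ofReal hint]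
          filter_upwards [ae_restrict_mem measurableSet_Ioi] with t ht
          have ht' : 0 < t := hR.trans ht
          positivity
      _ ≤ ENNReal.ofReal (2 * A / R ^ ((1 : ℝ) / 2)) := by
          apply ENNReal.ofReal_le_ofReal
          rw [integral_const_mul, integral_Ioi_rpow_of_lt (by norm_num) hR,
            show -((3 : ℝ) / 2) + 1 = -(1 / 2) by norm_num, Real.rpow_neg hR.le]
          apply le_of_eq
          ring

/-- Conditional Kakeya-type lower bound: if the `3δ`-tubes around `L ≥ c δ⁻²` unit segments
with `δ`-separated directions satisfy the incidence bound
`λ(P_r) ≤ C₀ δ³ L^{3/2} / r^{3/2}` for all `r ≥ 2`, then the union of the tubes has measure at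
least `C (log(1/δ))⁻²`, with `C` depending only on `c` and `C₀`. -/
theorem stmt16 (c C₀ : ℝ) (hc : 0 < c) (hC₀ : 0 < C₀) :
    ∃ C : ℝ, 0 < C ∧ ∀ δ : ℝ, δ ∈ Set.Ioo (0 : ℝ) (1 / 2) →
      ∀ (L : ℕ) (a b : Fin L → EuclideanSpace ℝ (Fin 3)),
        (∀ i, dist (a i) (b i) = 1) →
        (∀ i j, i ≠ j → δ ≤ InnerProductGeometry.angle (b i - a i) (b j - a j)) →
        c * δ ^ (-(2 : ℝ)) ≤ (L : ℝ) →
        (∀ r : ℝ, 2 ≤ r →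
          (volume : Measure (EuclideanSpace ℝ (Fin 3)))
              {x | r ≤ ({i : Fin L |
                  x ∈ cthickening (3 * δ) (segment ℝ (a i) (b i))}.ncard : ℝ)}
            ≤ ENNReal.ofReal (C₀ * δ ^ 3 * (L : ℝ) ^ ((3 : ℝ) / 2) / r ^ ((3 : ℝ) / 2))) →
        ENNReal.ofReal (C * (Real.log (1 / δ))⁻¹ ^ 2)
          ≤ (volume : Measure (EuclideanSpace ℝ (Fin 3)))
              (⋃ i : Fin L, cthickening (3 * δ) (segment ℝ (a i) (b i))) := by
  classical
  set K : ℝ := 2 / c + (16 * C₀) ^ 2 with hK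
  have hK0 : 0 < K := by positivity
  have hlog2 : 0 < Real.log 2 := Real.log_pos (by norm_num)
  refine ⟨Real.log 2 ^ 2 / (8 * K), by positivity, ?_⟩
  rintro δ ⟨h0, h1⟩ L a b hab - hL hr
  set T : Fin L → Set (EuclideanSpace ℝ (Fin 3)) :=
    fun i => cthickening (3 * δ) (segment ℝ (a i) (b i)) with hT
  set M : ℝ := L * δ ^ 2 with hM
  have hTm : ∀ i, MeasurableSet (T i) := fun i => isClosed_cthickening.measurableSet
  have hcM : c ≤ M := by
    rw [Real.rpow_neg h0.le, Real.rpow_two, ← div_eq_mul_inv, div_le_iff₀ (by positivity)] at hL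
    exact hL
  have hM0 : 0 < M := hc.trans_le hcM
  let f : EuclideanSpace ℝ (Fin 3) → ℝ := fun x => ({i : Fin L | x ∈ T i}.ncard : ℝ)
  have hf : f = fun x => ∑ i, (T i).indicator 1 x := by
    funext x
    simp only [f, Set.ncard_eq_toFinset_card', Set.toFinset_ofPred, Finset.card_filter]
    push_cast
    simp [Set.indicator_apply]
  have hfm : Measurable f := by
    rw [hf]
    exact Finset.measurable_sum _ fun i _ => measurable_one.indicator (hTm i)
  have hint : ∫⁻ x, ENNReal.ofReal (f x) = ∑ i, volume (T i) := by
    have : ∀ x, ENNReal.ofReal (f x) = ∑ i, (T i).indicator (1 : EuclideanSpace ℝ (Fin 3) → ℝ≥0∞) x := by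
      intro x
      have hnn : ∀ i ∈ Finset.univ, (0 : ℝ) ≤ (T i).indicator 1 x :=
        fun i _ => Set.indicator_nonneg (fun _ _ => zero_le_one' ℝ) x
      rw [hf]
      refine (ENNReal.ofReal_sum_of_nonneg hnn).trans ?_
      refine Finset.sum_congr rfl fun i _ => ?_
      by_cases hx : x ∈ T i <;> simp [hx]
    simp_rw [this]
    rw [lintegral_finsetSum _ fun i _ => measurable_one.indicator (hTm i)]
    exact Finset.sum_congr rfl fun i _ => lintegral_indicator_one (hTm i)
  have hlow : ENNReal.ofReal (M / 4) ≤ ∫⁻ x, ENNReal.ofReal (f x) := by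
    rw [hint]
    calc ENNReal.ofReal (M / 4) = ∑ _i : Fin L, ENNReal.ofReal (δ ^ 2 / 4) := by
          rw [Finset.sum_const, Finset.card_univ, Fintype.card_fin, nsmul_eq_mul,
            ← ENNReal.ofReal_natCast, ← ENNReal.ofReal_mul (by positivity), hM, mul_div_assoc]
      _ ≤ _ := Finset.sum_le_sum fun i _ => tube_volume_ge δ h0 h1 _ _ (hab i)
  have hKM : 2 ≤ K * M := by
    calc (2 : ℝ) = 2 / c * c := by field_simp
      _ ≤ K * M := by
          gcongr
          rw [hK]
          linarith [sq_nonneg (16 * C₀)]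
  have hup := lintegral_le_of_tail volume f hfm (fun x => by positivity) (⋃ i, T i)
    (fun x hx => by
      have hx' : 0 < {i : Fin L | x ∈ T i}.ncard := Nat.cast_pos.1 hx
      obtain ⟨i, hi⟩ := (Set.ncard_pos (Set.toFinite _)).1 hx'
      exact Set.mem_iUnion.2 ⟨i, hi⟩)
    (C₀ * δ ^ 3 * (L : ℝ) ^ ((3 : ℝ) / 2)) (K * M) (by positivity) (by positivity)
    (fun t ht => hr t (hKM.trans ht))
  have hpow : δ ^ 3 * (L : ℝ) ^ ((3 : ℝ) / 2) = M * M ^ ((1 : ℝ) / 2) := by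
    rw [← Real.rpow_one_add' hM0.le (by norm_num), show (1 : ℝ) + 1 / 2 = 3 / 2 by norm_num,
      hM, Real.mul_rpow (by positivity) (by positivity), mul_comm, ← Real.rpow_natCast δ 2,
      ← Real.rpow_mul h0.le, ← Real.rpow_natCast δ 3]
    norm_num
  have hKs : 16 * C₀ ≤ K ^ ((1 : ℝ) / 2) := by
    rw [← Real.sqrt_eq_rpow]
    apply Real.le_sqrt_of_sq_le
    rw [hK]
    linarith [div_pos two_pos hc]
  have htail : 2 * (C₀ * δ ^ 3 * (L : ℝ) ^ ((3 : ℝ) / 2)) / (K * M) ^ ((1 : ℝ) / 2) ≤ M / 8 := by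
    have hMs : 0 < M ^ ((1 : ℝ) / 2) := by positivity
    rw [mul_assoc C₀, hpow, Real.mul_rpow hK0.le hM0.le, div_le_iff₀ (by positivity)]
    calc 2 * (C₀ * (M * M ^ ((1 : ℝ) / 2))) = M / 8 * (16 * C₀ * M ^ ((1 : ℝ) / 2)) := by ring
      _ ≤ _ := by gcongr
  have hmain : ENNReal.ofReal (1 / (8 * K)) ≤ volume (⋃ i, T i) := by
    have h := hlow.trans (hup.trans (add_le_add_right (ENNReal.ofReal_le_ofReal htail) _))
    rw [show M / 4 = M / 8 + M / 8 by ring, ENNReal.ofReal_add (by positivity) (by positivity)] at h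
    have h' := (ENNReal.add_le_add_iff_right ENNReal.ofReal_ne_top).1 h
    rw [show M / 8 = K * M * (1 / (8 * K)) by field_simp, ENNReal.ofReal_mul (by positivity)] at h'
    exact (ENNReal.mul_le_mul_iff_right (by simpa using mul_pos hK0 hM0)
      ENNReal.ofReal_ne_top).1 h'
  refine le_trans (ENNReal.ofReal_le_ofReal ?_) hmain
  have hlog : Real.log 2 ≤ Real.log (1 / δ) :=
    Real.log_le_log two_pos (by rw [le_div_iff₀ h0]; linarith)
  have hlog0 := hlog2.trans_le hlog
  calc Real.log 2 ^ 2 / (8 * K) * (Real.log (1 / δ))⁻¹ ^ 2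
      ≤ Real.log (1 / δ) ^ 2 / (8 * K) * (Real.log (1 / δ))⁻¹ ^ 2 := by gcongr
    _ = 1 / (8 * K) := by field_simp
end

section
/- There is an absolute constant C > 0 with the following property. Let δ ∈ (0,1) and let l₁,…,l_L (L ≥ 2) be unit line segments in ℝ² with pairwise δ-separated directions. Then for every real r ≥ 2, λ(P_r) ≤ C δ L log L / r², where P_r is the set of points of ℝ² belonging to at least r of the tubes l₁^δ,…,l_L^δ. -/
/-!
This is Córdoba's `L²` argument. With `T i` the tubes and `f = ∑ i, 1_{T i}`, Chebyshev's inequality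
(`chebyshev`) gives `r² λ(P_r) ≤ ∫ f² = ∑ i, ∑ j, λ(T i ∩ T j)`. Writing the direction of segment
`i` as `(cos θ i, sin θ i)`, the intersection of two tubes lies in a parallelogram of area
`4δ² / |sin (θ j - θ i)|` and in a rectangle of area at most `6δ`, whence
`λ(T i ∩ T j) ≤ 12δ² / (δ + |sin (θ j - θ i)|)` (`tube_inter`).

For fixed `i` the sum over `j` is controlled as follows (`sum_inter_bound`): `|sin x|` is comparable
to the distance from `x` to the nearest multiple of `π`, and the `θ j` are `δ`-separated reals, so
the sum is at most a constant times `δ` times a harmonic sum `∑_{k < L} 1 / (k + 1) ≲ log L`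
(`sum_sep`). Using multiples of `π` rather than of `2π` takes care of nearly antiparallel
directions, which the hypothesis allows. The diagonal terms `i = j` need no separate treatment.
-/

open MeasureTheory Metric ENNReal

/-- Area of the parallelogram cut out by two strips: it is the preimage of a box of area `4 s t`
under a linear map of determinant `p q' - q p'`. -/
lemma area_aux (p q p' q' c d s t : ℝ) (hs : 0 ≤ s) (hD : p * q' - q * p' ≠ 0) :
    volume {x : EuclideanSpace ℝ (Fin 2) | |p * x 0 + q * x 1 - c| ≤ s ∧
      |p' * x 0 + q' * x 1 - d| ≤ t} = ENNReal.ofReal (4 * s * t / |p * q' - q * p'|) := by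
  have hdet : LinearMap.det (Matrix.toLin' !![p, q; p', q']) ≠ 0 := by
    simpa [LinearMap.det_toLin', Matrix.det_fin_two] using hD
  have h1 := Measure.addHaar_preimage_linearMap (volume : Measure (Fin 2 → ℝ)) hdet
    (Set.Icc ![c - s, d - t] ![c + s, d + t])
  rw [Real.volume_Icc_pi] at h1
  have h2 : {x : EuclideanSpace ℝ (Fin 2) | |p * x 0 + q * x 1 - c| ≤ s ∧
      |p' * x 0 + q' * x 1 - d| ≤ t} = WithLp.ofLp ⁻¹' ((Matrix.toLin' !![p, q; p', q']) ⁻¹'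
        (Set.Icc ![c - s, d - t] ![c + s, d + t])) := by
    ext x
    simp [Set.mem_Icc, Pi.le_def, Fin.forall_fin_two, dotProduct, Fin.sum_univ_two, abs_le]
    constructor
    · rintro ⟨⟨h1, h2⟩, h3, h4⟩
      refine ⟨⟨?_, ?_⟩, ?_, ?_⟩ <;> linarith
    · rintro ⟨⟨h1, h2⟩, h3, h4⟩
      refine ⟨⟨?_, ?_⟩, ?_, ?_⟩ <;> linarith
  rw [h2, (PiLp.volume_preserving_ofLp (Fin 2)).measure_preimage
    ((measurableSet_Icc.preimage (LinearMap.continuous_of_finiteDimensional _).measurable).nullMeasurableSet), h1]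
  simp only [LinearMap.det_toLin', Matrix.det_fin_two, Fin.prod_univ_two]
  simp
  rw [← ENNReal.ofReal_mul (by linarith), ← ENNReal.ofReal_mul (by positivity)]
  congr 1
  ring

lemma exists_angle (v : EuclideanSpace ℝ (Fin 2)) (hv : ‖v‖ = 1) :
    ∃ θ : ℝ, |θ| ≤ Real.pi ∧ v 0 = Real.cos θ ∧ v 1 = Real.sin θ := by
  let z : ℂ := ⟨v 0, v 1⟩
  have hz : ‖z‖ = 1 := by
    have h := EuclideanSpace.norm_sq_eq v
    rw [hv] at h
    simp only [Fin.sum_univ_two, Real.norm_eq_abs, sq_abs] at h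
    rw [Complex.norm_def, Complex.normSq_apply, Real.sqrt_eq_one]
    simp only [z]; nlinarith
  refine ⟨z.arg, Complex.abs_arg_le_pi z, ?_, ?_⟩
  · have := Complex.norm_mul_cos_arg z
    rw [hz] at this; simpa [z] using this.symm
  · have := Complex.norm_mul_sin_arg z
    rw [hz] at this; simpa [z] using this.symm

/-- The unoriented angle between two directions is at most the difference of their arguments, even
when that difference exceeds `π`. -/
lemma arccos_cos_le_abs (x : ℝ) : Real.arccos (Real.cos x) ≤ |x| := by
  rw [← Real.cos_abs]
  rcases le_total |x| Real.pi with h | h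
  · rw [Real.arccos_cos (abs_nonneg _) h]
  · exact (Real.arccos_le_pi _).trans h

/-- The `δ`-tube of a unit segment in direction `(cos θ, sin θ)` lies in a rectangle of side lengths
`2δ` and `1 + 2δ`, given by the normal and the tangential coordinate respectively. -/
lemma tube_mem {a b x : EuclideanSpace ℝ (Fin 2)} {δ θ : ℝ} (hδ : 0 ≤ δ)
    (h0 : (b - a) 0 = Real.cos θ) (h1 : (b - a) 1 = Real.sin θ)
    (hx : x ∈ cthickening δ (segment ℝ a b)) :
    |-Real.sin θ * x 0 + Real.cos θ * x 1 - (-Real.sin θ * a 0 + Real.cos θ * a 1)| ≤ δ ∧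
    |Real.cos θ * x 0 + Real.sin θ * x 1 - (Real.cos θ * a 0 + Real.sin θ * a 1 + 1 / 2)|
      ≤ 1 / 2 + δ := by
  have hc : IsCompact (segment ℝ a b) := by
    rw [segment_eq_image_lineMap]
    exact isCompact_Icc.image (AffineMap.lineMap_continuous)
  rw [hc.cthickening_eq_biUnion_closedBall hδ] at hx
  simp only [Set.mem_iUnion, mem_closedBall] at hx
  obtain ⟨y, hy, hxy⟩ := hx
  rw [segment_eq_image'] at hy
  obtain ⟨t, ⟨ht0, ht1⟩, rfl⟩ := hy
  have hn : (x 0 - (a 0 + t * Real.cos θ)) ^ 2 + (x 1 - (a 1 + t * Real.sin θ)) ^ 2 ≤ δ ^ 2 := by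
    have h2 := pow_le_pow_left₀ dist_nonneg hxy 2
    rw [EuclideanSpace.dist_eq, Real.sq_sqrt (by positivity)] at h2
    simp only [Fin.sum_univ_two, Real.dist_eq, sq_abs] at h2
    simpa [← h0, ← h1] using h2
  have hcs := Real.sin_sq_add_cos_sq θ
  set X := x 0 - (a 0 + t * Real.cos θ) with hX
  set Y := x 1 - (a 1 + t * Real.sin θ) with hY
  have e0 : x 0 = X + (a 0 + t * Real.cos θ) := by rw [hX]; ring
  have e1 : x 1 = Y + (a 1 + t * Real.sin θ) := by rw [hY]; ring
  have key : (-Real.sin θ * X + Real.cos θ * Y) ^ 2 + (Real.cos θ * X + Real.sin θ * Y) ^ 2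
      ≤ δ ^ 2 := by
    have : (-Real.sin θ * X + Real.cos θ * Y) ^ 2 + (Real.cos θ * X + Real.sin θ * Y) ^ 2
      = (Real.sin θ ^ 2 + Real.cos θ ^ 2) * (X ^ 2 + Y ^ 2) := by ring
    rw [this, hcs]; linarith
  have k1 := abs_le_of_sq_le_sq' (by nlinarith [sq_nonneg (Real.cos θ * X + Real.sin θ * Y)] :
    (-Real.sin θ * X + Real.cos θ * Y) ^ 2 ≤ δ ^ 2) hδ
  have k2 := abs_le_of_sq_le_sq' (by nlinarith [sq_nonneg (-Real.sin θ * X + Real.cos θ * Y)] :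
    (Real.cos θ * X + Real.sin θ * Y) ^ 2 ≤ δ ^ 2) hδ
  have f1 : -Real.sin θ * x 0 + Real.cos θ * x 1 - (-Real.sin θ * a 0 + Real.cos θ * a 1)
      = -Real.sin θ * X + Real.cos θ * Y := by rw [e0, e1]; ring
  have f2 : Real.cos θ * x 0 + Real.sin θ * x 1 - (Real.cos θ * a 0 + Real.sin θ * a 1 + 1 / 2)
      = Real.cos θ * X + Real.sin θ * Y + t * (Real.sin θ ^ 2 + Real.cos θ ^ 2) - 1 / 2 := by
    rw [e0, e1]; ring
  rw [f1, f2, hcs, abs_le, abs_le]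
  exact ⟨k1, by linarith, by linarith⟩

/-- The denominator `δ + |sin|` merges the parallelogram bound (large `|sin|`) with the bound by the
area of a single tube (small `|sin|`, including parallel and equal tubes). -/
lemma tube_inter {a b a' b' : EuclideanSpace ℝ (Fin 2)} {δ θ θ' : ℝ} (hδ : 0 < δ) (hδ1 : δ < 1)
    (h0 : (b - a) 0 = Real.cos θ) (h1 : (b - a) 1 = Real.sin θ)
    (h0' : (b' - a') 0 = Real.cos θ') (h1' : (b' - a') 1 = Real.sin θ') :
    volume (cthickening δ (segment ℝ a b) ∩ cthickening δ (segment ℝ a' b')) ≤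
      ENNReal.ofReal (12 * δ ^ 2 / (δ + |Real.sin (θ' - θ)|)) := by
  rcases le_total |Real.sin (θ' - θ)| δ with h | h
  · refine (measure_mono (fun x hx => tube_mem hδ.le h0 h1 hx.1)).trans ?_
    have hD : -Real.sin θ * Real.sin θ - Real.cos θ * Real.cos θ = -1 := by
      linarith [Real.sin_sq_add_cos_sq θ]
    refine (area_aux _ _ _ _ _ _ _ _ hδ.le (by rw [hD]; norm_num)).trans_le ?_
    apply ENNReal.ofReal_le_ofReal
    rw [hD, abs_neg, abs_one, div_one, le_div_iff₀ (by positivity)]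
    have : 4 * δ * (1 / 2 + δ) ≤ 6 * δ := by nlinarith
    calc _ ≤ 6 * δ * (2 * δ) := mul_le_mul this (by linarith) (by positivity) (by positivity)
      _ = _ := by ring
  · have hs : 0 < |Real.sin (θ' - θ)| := hδ.trans_le h
    refine (measure_mono (fun x hx => And.intro (tube_mem hδ.le h0 h1 hx.1).1
      (tube_mem hδ.le h0' h1' hx.2).1)).trans ?_
    have hD : -Real.sin θ * Real.cos θ' - Real.cos θ * -Real.sin θ' = Real.sin (θ' - θ) := by
      rw [Real.sin_sub]; ring
    refine (area_aux _ _ _ _ _ _ _ _ hδ.le (by rw [hD]; exact abs_pos.1 hs)).trans_le ?_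
    apply ENNReal.ofReal_le_ofReal
    rw [hD, div_le_div_iff₀ hs (by positivity)]
    nlinarith [mul_le_mul_of_nonneg_left h (sq_nonneg δ), mul_nonneg (sq_nonneg δ) hs.le]

/-- Jordan's inequality, periodized: `|sin x|` controls the distance to some multiple of `π`. Five
multiples suffice since `x` is a difference of two angles in `[-π, π]`. -/
lemma exists_near (x : ℝ) (hx : |x| ≤ 2 * Real.pi) :
    ∃ k ∈ Finset.Icc (-2 : ℤ) 2, |x - k * Real.pi| ≤ Real.pi / 2 * |Real.sin x| := by
  have hpi := Real.pi_pos
  have hr := abs_sub_round (x / Real.pi)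
  have e : x - round (x / Real.pi) * Real.pi = (x / Real.pi - round (x / Real.pi)) * Real.pi := by
    field_simp
  have hle : |x - round (x / Real.pi) * Real.pi| ≤ Real.pi / 2 := by
    rw [e, abs_mul, abs_of_pos hpi]; nlinarith
  refine ⟨round (x / Real.pi), ?_, ?_⟩
  · have h2 : |x / Real.pi| ≤ 2 := by
      rw [abs_div, abs_of_pos hpi, div_le_iff₀ hpi]; exact hx
    rw [abs_le] at h2 hr
    have u1 : ((round (x / Real.pi) : ℤ) : ℝ) < ((3 : ℤ) : ℝ) := by push_cast; linarith
    have u2 : ((-3 : ℤ) : ℝ) < ((round (x / Real.pi) : ℤ) : ℝ) := by push_cast; linarith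
    have := Int.cast_lt.1 u1
    have := Int.cast_lt.1 u2
    rw [Finset.mem_Icc]; omega
  · have h3 := Real.mul_abs_le_abs_sin hle
    rw [Real.sin_sub_int_mul_pi, abs_mul, abs_zpow] at h3
    simp only [abs_neg, abs_one, one_zpow, one_mul] at h3
    calc _ = Real.pi / 2 * (2 / Real.pi * |x - round (x / Real.pi) * Real.pi|) := by field_simp
      _ ≤ _ := by gcongr

/-- Sorting the points by `m j = ⌊(θ j - c) / δ⌋`, which is injective by separation, bounds the sum by
`2 ∑ j, 1 / (|m j| + 1)`, a sum over `L` distinct integers. -/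
lemma sum_sep {L : ℕ} (hL : 2 ≤ L) (θ : Fin L → ℝ) {δ : ℝ} (hδ : 0 < δ)
    (hsep : ∀ i j, i ≠ j → δ ≤ |θ i - θ j|) (c : ℝ) :
    ∑ j, δ / (δ + |θ j - c|) ≤ 4 * Real.log L + 6 := by
  have hL0 : (0 : ℝ) < L := by positivity
  let m : Fin L → ℤ := fun j => ⌊(θ j - c) / δ⌋
  have hm : Function.Injective m := by
    intro i j hij
    by_contra hne
    have h := Int.abs_sub_lt_one_of_floor_eq_floor hij
    rw [← sub_div, abs_div, abs_of_pos hδ, div_lt_one hδ] at h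
    have := hsep i j hne
    rw [show θ i - c - (θ j - c) = θ i - θ j by ring] at h
    linarith
  have hterm : ∀ j, δ / (δ + |θ j - c|) ≤ 2 * (1 / ((m j).natAbs + 1 : ℝ)) := by
    intro j
    have e : ((m j).natAbs : ℝ) = |(m j : ℝ)| := by
      rw [Nat.cast_natAbs, Int.cast_abs]
    have h1 : (m j : ℝ) ≤ (θ j - c) / δ := Int.floor_le _
    have h2 : (θ j - c) / δ < m j + 1 := Int.lt_floor_add_one _
    have h3 : |(m j : ℝ)| ≤ |θ j - c| / δ + 1 := by
      have h5 := abs_div (θ j - c) δ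
      rw [abs_of_pos hδ] at h5
      rw [← h5, abs_le]
      constructor
      · linarith [neg_abs_le ((θ j - c) / δ)]
      · linarith [le_abs_self ((θ j - c) / δ)]
    have h4 : δ / (δ + |θ j - c|) = 1 / (1 + |θ j - c| / δ) := by field_simp
    have : 0 ≤ |θ j - c| / δ := by positivity
    rw [h4, e, mul_one_div, div_le_div_iff₀ (by positivity) (by positivity)]
    linarith
  -- Terms with `|m j| ≥ L` are at most `1 / L` each, so their total is at most `1`; this replaces
  -- the rearrangement of the integers `m j` into an initial segment.
  have hbd : ∀ j, 1 / ((m j).natAbs + 1 : ℝ) ≤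
      (if (m j).natAbs < L then 1 / ((m j).natAbs + 1 : ℝ) else 0) + 1 / L := by
    intro j
    split_ifs with h
    · have : (0 : ℝ) ≤ 1 / L := by positivity
      linarith
    · rw [zero_add]
      apply one_div_le_one_div_of_le hL0
      have : (L : ℝ) ≤ (m j).natAbs := by exact_mod_cast not_lt.1 h
      linarith
  have hmain : ∑ j, (if (m j).natAbs < L then 1 / ((m j).natAbs + 1 : ℝ) else 0) ≤
      2 * (1 + Real.log L) := by
    rw [← Finset.sum_filter]
    rw [← Finset.sum_fiberwise_of_maps_to (g := fun j => (m j).natAbs) (t := Finset.range L)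
      (fun j hj => by simpa using hj)]
    have hh := harmonic_le_one_add_log L
    rw [harmonic] at hh
    push_cast at hh
    refine le_trans ?_ (mul_le_mul_of_nonneg_left hh (by norm_num : (0:ℝ) ≤ 2))
    rw [Finset.mul_sum]
    refine Finset.sum_le_sum fun k _ => ?_
    have hcard : ({j ∈ ({j | (m j).natAbs < L} : Finset (Fin L)) | (m j).natAbs = k}).card ≤ 2 := by
      refine (Finset.card_le_card_of_injOn m (t := {(k : ℤ), -(k : ℤ)}) ?_ hm.injOn).trans
        Finset.card_le_two
      intro j hj
      have := (Finset.mem_filter.1 (Finset.mem_coe.1 hj)).2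
      simp only [Finset.coe_insert, Finset.coe_singleton, Set.mem_insert_iff,
        Set.mem_singleton_iff]
      omega
    rw [Finset.sum_congr rfl (g := fun _ => ((k : ℝ) + 1)⁻¹)
      (fun j hj => by rw [(Finset.mem_filter.1 hj).2, one_div])]
    rw [Finset.sum_const, nsmul_eq_mul]
    gcongr
    exact_mod_cast hcard
  calc ∑ j, δ / (δ + |θ j - c|) ≤ ∑ j, 2 * ((if (m j).natAbs < L then
          1 / ((m j).natAbs + 1 : ℝ) else 0) + 1 / L) :=
        Finset.sum_le_sum fun j _ => (hterm j).trans (by linarith [hbd j])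
    _ = 2 * (∑ j, (if (m j).natAbs < L then 1 / ((m j).natAbs + 1 : ℝ) else 0) + 1) := by
        rw [← Finset.mul_sum, Finset.sum_add_distrib]
        simp [hL0.ne']
    _ ≤ _ := by linarith

/-- Summing the intersection bound over all tubes `j` for fixed `i`: each term is dominated by one of
five terms centred at `θ i + k π`, `|k| ≤ 2`. -/
lemma sum_inter_bound {L : ℕ} (hL : 2 ≤ L) (θ : Fin L → ℝ) {δ : ℝ} (hδ : 0 < δ)
    (hsep : ∀ i j, i ≠ j → δ ≤ |θ i - θ j|) (hθ : ∀ i, |θ i| ≤ Real.pi) (i : Fin L) :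
    ∑ j, 12 * δ ^ 2 / (δ + |Real.sin (θ j - θ i)|) ≤ 2000 * δ * Real.log L := by
  have hpi := Real.pi_pos
  have hpi4 := Real.pi_le_four
  have hpi2 := Real.two_le_pi
  have hterm : ∀ j, 12 * δ ^ 2 / (δ + |Real.sin (θ j - θ i)|) ≤
      24 * δ * ∑ k ∈ Finset.Icc (-2 : ℤ) 2, δ / (δ + |θ j - (θ i + k * Real.pi)|) := by
    intro j
    obtain ⟨k, hk, hle⟩ := exists_near (θ j - θ i)
      ((abs_sub _ _).trans (by linarith [hθ i, hθ j]))
    refine le_trans ?_ (mul_le_mul_of_nonneg_left (Finset.single_le_sum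
      (f := fun k : ℤ => δ / (δ + |θ j - (θ i + k * Real.pi)|)) (fun _ _ => by positivity) hk)
      (by positivity))
    have hle' : |θ j - (θ i + k * Real.pi)| ≤ 2 * |Real.sin (θ j - θ i)| := by
      rw [← sub_sub]
      refine hle.trans ?_
      gcongr
      linarith
    rw [mul_div_assoc', div_le_div_iff₀ (by positivity) (by positivity)]
    nlinarith [mul_le_mul_of_nonneg_left hle' (sq_nonneg δ), pow_pos hδ 3]
  have hlog : 1 / 2 ≤ Real.log L := by
    have h1 := Real.log_two_gt_d9
    have h2 : Real.log 2 ≤ Real.log L := Real.log_le_log (by norm_num) (by exact_mod_cast hL)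
    linarith
  calc _ ≤ ∑ j, 24 * δ * ∑ k ∈ Finset.Icc (-2 : ℤ) 2, δ / (δ + |θ j - (θ i + k * Real.pi)|) :=
        Finset.sum_le_sum fun j _ => hterm j
    _ = 24 * δ * ∑ k ∈ Finset.Icc (-2 : ℤ) 2, ∑ j, δ / (δ + |θ j - (θ i + k * Real.pi)|) := by
        rw [← Finset.mul_sum, Finset.sum_comm]
    _ ≤ 24 * δ * ∑ k ∈ Finset.Icc (-2 : ℤ) 2, (4 * Real.log L + 6) := by
        gcongr with k _
        exact sum_sep hL θ hδ hsep _
    _ = 24 * δ * (5 * (4 * Real.log L + 6)) := by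
        rw [Finset.sum_const, nsmul_eq_mul, show (Finset.Icc (-2 : ℤ) 2).card = 5 from rfl,
          Nat.cast_ofNat]
    _ ≤ _ := by nlinarith [mul_le_mul_of_nonneg_left hlog hδ.le]

/-- Chebyshev's inequality for the square of the multiplicity function of the sets `T i`. -/
lemma chebyshev {L : ℕ} (T : Fin L → Set (EuclideanSpace ℝ (Fin 2)))
    (hT : ∀ i, MeasurableSet (T i)) {r : ℝ} (hr : 0 < r) :
    ENNReal.ofReal (r ^ 2) * volume {x | r ≤ ({i : Fin L | x ∈ T i}.ncard : ℝ)} ≤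
      ∑ i, ∑ j, volume (T i ∩ T j) := by
  classical
  let F : EuclideanSpace ℝ (Fin 2) → ℝ≥0∞ := fun x => ∑ i, ∑ j, (T i ∩ T j).indicator 1 x
  have hF : Measurable F := Finset.measurable_sum _ fun i _ => Finset.measurable_sum _ fun j _ =>
    measurable_one.indicator ((hT i).inter (hT j))
  have hint : ∫⁻ x, F x = ∑ i, ∑ j, volume (T i ∩ T j) := by
    rw [lintegral_finsetSum _ fun i _ => Finset.measurable_sum _ fun j _ =>
      measurable_one.indicator ((hT i).inter (hT j))]
    refine Finset.sum_congr rfl fun i _ => ?_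
    rw [lintegral_finsetSum _ fun j _ => measurable_one.indicator ((hT i).inter (hT j))]
    refine Finset.sum_congr rfl fun j _ => ?_
    rw [lintegral_indicator_one ((hT i).inter (hT j))]
  have hFx : ∀ x, F x = ENNReal.ofReal (({i : Fin L | x ∈ T i}.ncard : ℝ) ^ 2) := by
    intro x
    have h1 : ∑ i, (T i).indicator (1 : EuclideanSpace ℝ (Fin 2) → ℝ≥0∞) x = ({i : Fin L | x ∈ T i}.ncard : ℝ≥0∞) := by
      rw [Set.ncard_eq_toFinset_card']
      simp [Set.indicator_apply]
    rw [ENNReal.ofReal_pow (by positivity), ENNReal.ofReal_natCast, ← h1, sq,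
      Finset.sum_mul_sum]
    simp only [F, Set.inter_indicator_one, Pi.mul_apply]
  rw [← hint]
  refine le_trans (mul_le_mul_right (measure_mono fun x hx => ?_) _)
    (mul_meas_ge_le_lintegral hF (ENNReal.ofReal (r ^ 2)))
  rw [Set.mem_ofPred_eq, hFx]
  exact ENNReal.ofReal_le_ofReal (pow_le_pow_left₀ hr.le hx 2)

theorem stmt17 :
    ∃ C : ℝ, 0 < C ∧ ∀ δ : ℝ, δ ∈ Set.Ioo (0 : ℝ) 1 →
      ∀ (L : ℕ), 2 ≤ L → ∀ (a b : Fin L → EuclideanSpace ℝ (Fin 2)),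
        (∀ i, dist (a i) (b i) = 1) →
        (∀ i j, i ≠ j → δ ≤ InnerProductGeometry.angle (b i - a i) (b j - a j)) →
        ∀ r : ℝ, 2 ≤ r →
          (volume : Measure (EuclideanSpace ℝ (Fin 2)))
              {x | r ≤ ({i : Fin L | x ∈ cthickening δ (segment ℝ (a i) (b i))}.ncard : ℝ)}
            ≤ ENNReal.ofReal (C * δ * (L : ℝ) * Real.log L / r ^ 2) := by
  refine ⟨2000, by norm_num, ?_⟩
  rintro δ ⟨hδ, hδ1⟩ L hL a b hab hang r hr
  have hnorm : ∀ i, ‖b i - a i‖ = 1 := fun i => by rw [← dist_eq_norm, dist_comm, hab]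
  choose θ hθ hcos hsin using fun i => exists_angle (b i - a i) (hnorm i)
  have hsep : ∀ i j, i ≠ j → δ ≤ |θ i - θ j| := by
    intro i j hij
    refine ((hang i j hij).trans_eq ?_).trans (arccos_cos_le_abs _)
    rw [InnerProductGeometry.angle, hnorm, hnorm, mul_one, div_one]
    congr 1
    rw [PiLp.inner_apply, Fin.sum_univ_two, hcos, hcos, hsin, hsin, Real.cos_sub]
    simp only [RCLike.inner_apply, conj_trivial]
    ring
  have hr0 : 0 < r := by linarith
  have hch := chebyshev (fun i => cthickening δ (segment ℝ (a i) (b i)))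
    (fun i => isClosed_cthickening.measurableSet) hr0
  have hsum : ∑ i, ∑ j, volume (cthickening δ (segment ℝ (a i) (b i)) ∩
      cthickening δ (segment ℝ (a j) (b j))) ≤ ENNReal.ofReal (2000 * δ * L * Real.log L) := by
    calc _ ≤ ∑ i, ∑ j, ENNReal.ofReal (12 * δ ^ 2 / (δ + |Real.sin (θ j - θ i)|)) := by
          gcongr with i _ j _
          exact tube_inter hδ hδ1 (hcos i) (hsin i) (hcos j) (hsin j)
      _ ≤ ∑ i : Fin L, ENNReal.ofReal (2000 * δ * Real.log L) := by
          gcongr with i _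
          rw [← ENNReal.ofReal_sum_of_nonneg fun j _ => by positivity]
          exact ENNReal.ofReal_le_ofReal (sum_inter_bound hL θ hδ hsep hθ i)
      _ = _ := by
          rw [Finset.sum_const, Finset.card_univ, Fintype.card_fin, nsmul_eq_mul,
            ← ENNReal.ofReal_natCast, ← ENNReal.ofReal_mul (by positivity)]
          congr 1
          ring
  rw [ENNReal.ofReal_div_of_pos (by positivity), ENNReal.le_div_iff_mul_le
    (Or.inl (by simpa using hr0.ne')) (Or.inl ENNReal.ofReal_ne_top), mul_comm]
  exact hch.trans hsum
end
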